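/- arXiv:1206.3688 — 3 statements merged into one kernel-verified Lean document; each statement's English description precedes it below -/
import Mathlib

section
/- Let X be a random variable with the property that X^μ has density y ↦ (sin(πμ)/(πμ)) · 1/(y² + 2y cos(πμ) + 1) on [0,∞), where μ ∈ (0,1). Then for every s ≥ 0, E[1/(1+sX)] = 1/(1+s^μ). -/
open MeasureTheory Real

open Filter Topology

lemma norm_inv_one_add_le_two {z : ℂ} (hz : ‖z‖ ≤ 1 / 2) : ‖(1 + z)⁻¹‖ ≤ 2 := by
  have h : 1 - ‖z‖ ≤ ‖1 + z‖ := by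
    simpa using norm_sub_norm_le (1 : ℂ) (-z)
  rw [norm_inv]
  exact inv_le_of_inv_le₀ (by norm_num) (by linarith)

lemma norm_inv_one_add_le_one {z : ℂ} (hz : 2 ≤ ‖z‖) : ‖(1 + z)⁻¹‖ ≤ 1 := by
  have h : ‖z‖ - 1 ≤ ‖1 + z‖ := by
    simpa [add_comm] using norm_sub_norm_le z (-1 : ℂ)
  rw [norm_inv]
  exact inv_le_one_of_one_le₀ (by linarith)

lemma one_add_cexp_ne_zero {z : ℂ} (h₁ : -π < z.im) (h₂ : z.im < π) :
    1 + Complex.exp z ≠ 0 := by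
  intro h
  have hz := Complex.log_exp h₁ h₂.le
  rw [eq_neg_of_add_eq_zero_right h, Complex.log_neg_one] at hz
  have := congrArg Complex.im hz
  simp at this
  linarith

lemma eq_zero_of_cexp_eq_one {z : ℂ} (h₁ : -(2 * π) < z.im) (h₂ : z.im < 2 * π)
    (h : Complex.exp z = 1) : z = 0 := by
  obtain ⟨n, rfl⟩ := Complex.exp_eq_one_iff.1 h
  have him : ((n : ℂ) * (2 * π * Complex.I)).im = n * (2 * π) := by simp
  rw [him] at h₁ h₂
  have hn₁ : (-1 : ℝ) < n := by nlinarith [pi_pos]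
  have hn₂ : (n : ℝ) < 1 := by nlinarith [pi_pos]
  have : n = 0 := by
    have h3 : (-1 : ℤ) < n := by exact_mod_cast hn₁
    have h4 : n < 1 := by exact_mod_cast hn₂
    omega
  simp [this]

/-- The quotient whose integral over the boundary of a rectangle of height `2π` gives the
Stieltjes transform. -/
noncomputable def stripQuotient (μ a : ℝ) (c w : ℂ) : ℂ :=
  ((1 + Complex.exp (μ * w))⁻¹ - c) * (1 + -Complex.exp (a + w))⁻¹

lemma norm_cexp_mul_add (μ x y : ℝ) :
    ‖Complex.exp (μ * (x + y * Complex.I))‖ = Real.exp (μ * x) := by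
  rw [Complex.norm_exp]; simp

lemma norm_cexp_add_add (a x y : ℝ) :
    ‖-Complex.exp (a + (x + y * Complex.I))‖ = Real.exp (a + x) := by
  rw [norm_neg, Complex.norm_exp]; simp

@[fun_prop]
lemma measurable_stripQuotient (μ a : ℝ) (c : ℂ) : Measurable (stripQuotient μ a c) := by
  unfold stripQuotient
  fun_prop

lemma tendsto_integral_stripQuotient_atBot {μ : ℝ} (hμ : 0 < μ) (a : ℝ) (c : ℂ) :
    Tendsto (fun x : ℝ => ∫ y : ℝ in -π..π, stripQuotient μ a c (x + y * Complex.I)) atBot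
      (𝓝 (2 * π * (1 - c))) := by
  have e₁ : Tendsto (fun x : ℝ => Real.exp (μ * x)) atBot (𝓝 0) :=
    Real.tendsto_exp_atBot.comp (tendsto_id.const_mul_atBot hμ)
  have e₂ : Tendsto (fun x : ℝ => Real.exp (a + x)) atBot (𝓝 0) :=
    Real.tendsto_exp_atBot.comp (tendsto_atBot_add_const_left _ _ tendsto_id)
  have hlim : (2 * π * (1 - c) : ℂ) = ∫ y : ℝ in -π..π, (1 - c) := by
    simp [← two_mul, mul_sub]
  rw [hlim]
  refine intervalIntegral.tendsto_integral_filter_of_dominated_convergence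
    (fun _ => (2 + ‖c‖) * 2) (.of_forall fun x => ?_) ?_ (by simp) (.of_forall fun y _ => ?_)
  · exact Measurable.aestronglyMeasurable (by fun_prop)
  · filter_upwards [e₁.eventually_le_const (by norm_num : (0 : ℝ) < 1 / 2),
      e₂.eventually_le_const (by norm_num : (0 : ℝ) < 1 / 2)] with x h₁ h₂
    refine .of_forall fun y _ => ?_
    rw [stripQuotient, norm_mul]
    rw [← norm_cexp_mul_add μ x y] at h₁
    rw [← norm_cexp_add_add a x y] at h₂
    gcongr
    · exact (norm_sub_le _ _).trans (by gcongr; exact norm_inv_one_add_le_two h₁)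
    · exact norm_inv_one_add_le_two h₂
  · have z₁ : Tendsto (fun x : ℝ => Complex.exp (μ * (x + y * Complex.I))) atBot (𝓝 0) := by
      rw [tendsto_zero_iff_norm_tendsto_zero]
      simpa only [norm_cexp_mul_add] using e₁
    have z₂ : Tendsto (fun x : ℝ => -Complex.exp (a + (x + y * Complex.I))) atBot (𝓝 0) := by
      rw [tendsto_zero_iff_norm_tendsto_zero]
      simpa only [norm_cexp_add_add] using e₂
    have := (((z₁.const_add 1).inv₀ (by simp)).sub_const c).mul
      ((z₂.const_add 1).inv₀ (by simp))
    simpa [stripQuotient] using this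

lemma tendsto_integral_stripQuotient_atTop {μ : ℝ} (hμ : 0 < μ) (a : ℝ) (c : ℂ) :
    Tendsto (fun x : ℝ => ∫ y : ℝ in -π..π, stripQuotient μ a c (x + y * Complex.I)) atTop
      (𝓝 0) := by
  have e₁ : Tendsto (fun x : ℝ => Real.exp (μ * x)) atTop atTop :=
    Real.tendsto_exp_atTop.comp (tendsto_id.const_mul_atTop hμ)
  have e₂ : Tendsto (fun x : ℝ => Real.exp (a + x)) atTop atTop :=
    Real.tendsto_exp_atTop.comp (tendsto_atTop_add_const_left _ _ tendsto_id)
  have hlim : (0 : ℂ) = ∫ y : ℝ in -π..π, (0 : ℂ) := by simp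
  rw [hlim]
  refine intervalIntegral.tendsto_integral_filter_of_dominated_convergence
    (fun _ => (1 + ‖c‖) * 1) (.of_forall fun x => ?_) ?_ (by simp) (.of_forall fun y _ => ?_)
  · exact Measurable.aestronglyMeasurable (by fun_prop)
  · filter_upwards [e₁.eventually_ge_atTop 2, e₂.eventually_ge_atTop 2] with x h₁ h₂
    refine .of_forall fun y _ => ?_
    rw [stripQuotient, norm_mul]
    rw [← norm_cexp_mul_add μ x y] at h₁
    rw [← norm_cexp_add_add a x y] at h₂
    gcongr
    · exact (norm_sub_le _ _).trans (by gcongr; exact norm_inv_one_add_le_one h₁)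
    · exact norm_inv_one_add_le_one h₂
  · have inv_tendsto {f : ℝ → ℂ} (hf : Tendsto (fun x => ‖f x‖) atTop atTop) :
        Tendsto (fun x => (1 + f x)⁻¹) atTop (𝓝 0) := by
      refine tendsto_inv₀_cobounded.comp ?_
      rw [← tendsto_norm_atTop_iff_cobounded]
      refine tendsto_atTop_mono (fun x => ?_) (tendsto_atTop_add_const_right _ (-1) hf)
      simpa [add_comm, sub_eq_add_neg] using norm_sub_norm_le (f x) (-1 : ℂ)
    have z₁ := inv_tendsto (f := fun x : ℝ => Complex.exp (μ * (x + y * Complex.I)))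
      (by simpa only [norm_cexp_mul_add] using e₁)
    have z₂ := inv_tendsto (f := fun x : ℝ => -Complex.exp (a + (x + y * Complex.I)))
      (by simpa only [norm_cexp_add_add] using e₂)
    simpa [stripQuotient] using (z₁.sub_const c).mul z₂

/-- The singularity of `stripQuotient` at `-a` is removable when `c` is the value there. -/
lemma exists_differentiableOn_eq_stripQuotient {μ : ℝ} (hμ : μ ∈ Set.Ioo (0 : ℝ) 1) (a : ℝ) :
    ∃ F : ℂ → ℂ, DifferentiableOn ℂ F {w | |w.im| ≤ π} ∧
      ∀ w ≠ -(a : ℂ), F w = stripQuotient μ a (1 + Complex.exp (μ * -(a : ℂ)))⁻¹ w := by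
  obtain ⟨hμ0, hμ1⟩ := hμ
  set h : ℂ → ℂ := fun w => (1 + Complex.exp (μ * w))⁻¹ with hh
  set g : ℂ → ℂ := fun w => 1 + -Complex.exp (a + w) with hg
  set S : Set ℂ := {w | |μ * w.im| < π} ∩ {w | |w.im| < 2 * π} with hS
  have hSo : IsOpen S := by
    apply IsOpen.inter <;> exact isOpen_lt (by fun_prop) (by fun_prop)
  have haS : -(a : ℂ) ∈ S := by simp [hS, pi_pos]
  have hsub : {w : ℂ | |w.im| ≤ π} ⊆ S := by
    intro w hw
    have hw : |w.im| ≤ π := hw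
    refine ⟨?_, ?_⟩
    · show |μ * w.im| < π
      rw [abs_mul, abs_of_pos hμ0]
      nlinarith [abs_nonneg w.im, pi_pos]
    · show |w.im| < 2 * π
      linarith [pi_pos]
  have hd : DifferentiableOn ℂ h S := by
    refine DifferentiableOn.fun_inv (by fun_prop) fun w hw => ?_
    have : -π < μ * w.im ∧ μ * w.im < π := abs_lt.1 hw.1
    exact one_add_cexp_ne_zero (by simpa using this.1) (by simpa using this.2)
  have gd : Differentiable ℂ g := by fun_prop
  have g0 : g (-(a : ℂ)) = 0 := by simp [hg]
  have gne : ∀ w ∈ S, dslope g (-(a : ℂ)) w ≠ 0 := by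
    intro w hw
    by_cases hwa : w = -(a : ℂ)
    · have hder : HasDerivAt g (-Complex.exp (a + -(a : ℂ))) (-(a : ℂ)) := by
        have := (((hasDerivAt_id (-(a : ℂ))).const_add (a : ℂ)).cexp.neg).const_add (1 : ℂ)
        exact this.congr_deriv (by simp)
      rw [hwa, dslope_same, hder.deriv]
      exact neg_ne_zero.2 (Complex.exp_ne_zero _)
    · rw [dslope_of_ne _ hwa, slope_def_field, g0, sub_zero]
      refine div_ne_zero (fun h0 => hwa ?_) (sub_ne_zero.2 hwa)
      have : -(2 * π) < w.im ∧ w.im < 2 * π := abs_lt.1 hw.2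
      have h1 : Complex.exp (a + w) = 1 := by
        linear_combination -h0
      have h2 := eq_zero_of_cexp_eq_one (by simpa using this.1) (by simpa using this.2) h1
      linear_combination h2
  refine ⟨fun w => dslope h (-(a : ℂ)) w / dslope g (-(a : ℂ)) w, ?_, fun w hw => ?_⟩
  · refine DifferentiableOn.mono ?_ hsub
    exact ((Complex.differentiableOn_dslope (hSo.mem_nhds haS)).2 hd).fun_div
      ((Complex.differentiableOn_dslope (hSo.mem_nhds haS)).2 gd.differentiableOn) gne
  · have hw' : w - -(a : ℂ) ≠ 0 := sub_ne_zero.2 hw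
    simp only [dslope_of_ne _ hw, slope_def_field, g0, sub_zero]
    rw [div_div_div_cancel_right₀ hw', div_eq_mul_inv]
    rfl

/-- The density of `log X`, times `1 / (1 + exp (a + t))`. -/
noncomputable def logKernel (μ a t : ℝ) : ℝ :=
  Real.sin (π * μ) / π * (Real.exp (μ * t) /
    (Real.exp (μ * t) ^ 2 + 2 * Real.exp (μ * t) * Real.cos (π * μ) + 1)) *
      (1 / (1 + Real.exp (a + t)))

lemma quadratic_pos {μ : ℝ} (hμ : μ ∈ Set.Ioo (0 : ℝ) 1) (y : ℝ) :
    0 < y ^ 2 + 2 * y * Real.cos (π * μ) + 1 := by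
  have hs : 0 < Real.sin (π * μ) :=
    sin_pos_of_pos_of_lt_pi (mul_pos pi_pos hμ.1) (by nlinarith [pi_pos, hμ.2])
  nlinarith [Real.sin_sq_add_cos_sq (π * μ), sq_nonneg (y + Real.cos (π * μ)), pow_pos hs 2]

lemma stripQuotient_sub_stripQuotient {μ : ℝ} (hμ : μ ∈ Set.Ioo (0 : ℝ) 1) (a : ℝ) (c : ℂ)
    (t : ℝ) :
    stripQuotient μ a c (t + (-π : ℝ) * Complex.I) - stripQuotient μ a c (t + π * Complex.I) =
      2 * π * Complex.I * (logKernel μ a t : ℂ) := by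
  have k₁ : Complex.exp (a + (t + (-π : ℝ) * Complex.I)) = -Complex.exp (a + t) := by
    rw [← add_assoc, Complex.exp_add]; simp [Complex.exp_neg]
  have k₂ : Complex.exp (a + (t + π * Complex.I)) = -Complex.exp (a + t) := by
    rw [← add_assoc, Complex.exp_add]; simp
  set E := Real.exp (μ * t)
  set C := Real.cos (π * μ)
  set D := Real.sin (π * μ)
  have h₁ : Complex.exp (μ * (t + (-π : ℝ) * Complex.I)) = E * (C - D * Complex.I) := by
    have : (μ * (t + (-π : ℝ) * Complex.I) : ℂ) = (μ * t : ℝ) + (-(π * μ) : ℝ) * Complex.I := by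
      push_cast; ring
    rw [this, Complex.exp_add, Complex.exp_mul_I, ← Complex.ofReal_exp, ← Complex.ofReal_cos,
      ← Complex.ofReal_sin, Real.cos_neg, Real.sin_neg]
    push_cast [E, C, D]; ring
  have h₂ : Complex.exp (μ * (t + π * Complex.I)) = E * (C + D * Complex.I) := by
    have : (μ * (t + π * Complex.I) : ℂ) = (μ * t : ℝ) + (π * μ : ℝ) * Complex.I := by
      push_cast; ring
    rw [this, Complex.exp_add, Complex.exp_mul_I, ← Complex.ofReal_exp, ← Complex.ofReal_cos,
      ← Complex.ofReal_sin]
  have hq : ((E ^ 2 + 2 * E * C + 1 : ℝ) : ℂ) ≠ 0 :=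
    Complex.ofReal_ne_zero.2 (quadratic_pos hμ E).ne'
  have hCD : (D : ℂ) ^ 2 + (C : ℂ) ^ 2 = 1 := by
    exact_mod_cast Real.sin_sq_add_cos_sq (π * μ)
  have hprod : (1 + E * (C - D * Complex.I)) * (1 + E * (C + D * Complex.I)) =
      ((E ^ 2 + 2 * E * C + 1 : ℝ) : ℂ) := by
    push_cast
    linear_combination (E : ℂ) ^ 2 * hCD - (E : ℂ) ^ 2 * D ^ 2 * Complex.I_sq
  have hA := left_ne_zero_of_mul (hprod ▸ hq)
  have hB := right_ne_zero_of_mul (hprod ▸ hq)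
  have key : (1 + E * (C - D * Complex.I))⁻¹ - (1 + E * (C + D * Complex.I))⁻¹ =
      2 * Complex.I * D * (E / ((E ^ 2 + 2 * E * C + 1 : ℝ) : ℂ)) := by
    rw [inv_sub_inv hA hB, hprod]
    ring
  have hπ : (π : ℂ) ≠ 0 := Complex.ofReal_ne_zero.2 pi_ne_zero
  have hlog : (logKernel μ a t : ℂ) = D / π * (E / ((E ^ 2 + 2 * E * C + 1 : ℝ) : ℂ)) *
      (1 + Complex.exp (a + t))⁻¹ := by
    simp only [logKernel, E, C, D]; push_cast; rw [one_div]
  rw [stripQuotient, stripQuotient, h₁, h₂, k₁, k₂, hlog, neg_neg, ← sub_mul,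
    sub_sub_sub_cancel_right, key]
  field_simp

lemma continuous_logKernel {μ : ℝ} (hμ : μ ∈ Set.Ioo (0 : ℝ) 1) (a : ℝ) :
    Continuous (logKernel μ a) := by
  unfold logKernel
  have h1 := fun t : ℝ => (quadratic_pos hμ (Real.exp (μ * t))).ne'
  have h2 : ∀ t : ℝ, 1 + Real.exp (a + t) ≠ 0 := fun t => by positivity
  fun_prop (disch := assumption)

lemma tendsto_integral_logKernel {μ : ℝ} (hμ : μ ∈ Set.Ioo (0 : ℝ) 1) (a : ℝ) :
    Tendsto (fun T : ℝ => ∫ t in -T..T, logKernel μ a t) atTop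
      (𝓝 (1 / (1 + Real.exp (μ * a)))) := by
  obtain ⟨F, hF, hFe⟩ := exists_differentiableOn_eq_stripQuotient hμ a
  set c : ℂ := (1 + Complex.exp (μ * -(a : ℂ)))⁻¹ with hc
  have hl := (tendsto_integral_stripQuotient_atBot hμ.1 a c).comp tendsto_neg_atTop_atBot
  have hr := tendsto_integral_stripQuotient_atTop hμ.1 a c
  have hrect : ∀ᶠ T : ℝ in atTop, ((∫ t in -T..T, logKernel μ a t : ℝ) : ℂ) = (2 * π : ℂ)⁻¹ *
      ((∫ y : ℝ in -π..π, stripQuotient μ a c ((-T : ℝ) + y * Complex.I)) -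
        ∫ y : ℝ in -π..π, stripQuotient μ a c (T + y * Complex.I)) := by
    filter_upwards [eventually_gt_atTop |a|] with T hT
    have hCauchy := Complex.integral_boundary_rect_eq_zero_of_differentiableOn F
      ⟨-T, -π⟩ ⟨T, π⟩ (hF.mono fun w hw => by
        have := hw.2
        simp only [Set.uIcc_of_le (neg_le_self pi_pos.le)] at this
        exact abs_le.2 this)
    have him : ∀ (t y : ℝ), y ≠ 0 ∨ t ≠ -a → (t + y * Complex.I : ℂ) ≠ -(a : ℂ) := by
      intro t y hty h0
      have h1 := congrArg Complex.re h0
      have h2 := congrArg Complex.im h0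
      simp at h1 h2
      tauto
    have hT1 := (abs_lt.1 hT).1
    have hT2 := (abs_lt.1 hT).2
    simp only [hFe _ (him _ π (.inl pi_ne_zero)),
      hFe _ (him _ (-π) (.inl (neg_ne_zero.2 pi_ne_zero))),
      hFe _ (him T _ (.inr (by linarith))), hFe _ (him (-T) _ (.inr (by intro h; linarith)))]
      at hCauchy
    have hcont : ∀ y : ℝ, y ≠ 0 → |y| ≤ π → Continuous fun t : ℝ =>
        stripQuotient μ a c (t + y * Complex.I) := by
      intro y hy hyπ
      have : ContinuousOn (fun t : ℝ => F (t + y * Complex.I)) Set.univ :=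
        hF.continuousOn.comp (by fun_prop) fun t _ => by simpa using hyπ
      rw [continuousOn_univ] at this
      simpa only [hFe _ (him _ y (.inl hy))] using this
    rw [← intervalIntegral.integral_sub
      ((hcont (-π) (neg_ne_zero.2 pi_ne_zero) (by simp [abs_of_pos pi_pos])).intervalIntegrable _ _)
      ((hcont π pi_ne_zero (by simp [abs_of_pos pi_pos])).intervalIntegrable _ _)] at hCauchy
    simp only [stripQuotient_sub_stripQuotient hμ, intervalIntegral.integral_const_mul,
      intervalIntegral.integral_ofReal, smul_eq_mul] at hCauchy
    have hπ : (π : ℂ) ≠ 0 := Complex.ofReal_ne_zero.2 pi_ne_zero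
    rw [eq_inv_mul_iff_mul_eq₀ (by simp [hπ])]
    apply mul_left_cancel₀ Complex.I_ne_zero
    linear_combination hCauchy
  have hlim := ((hl.sub hr).const_mul (2 * π : ℂ)⁻¹).congr' (hrect.mono fun _ h => h.symm)
  have hval : (2 * π : ℂ)⁻¹ * (2 * π * (1 - c) - 0) =
      ((1 / (1 + Real.exp (μ * a)) : ℝ) : ℂ) := by
    have hπ : (π : ℂ) ≠ 0 := Complex.ofReal_ne_zero.2 pi_ne_zero
    have hc' : c = ((1 + Real.exp (μ * a))⁻¹ * Real.exp (μ * a) : ℝ) := by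
      have : (1 + Real.exp (-(μ * a)))⁻¹ = (1 + Real.exp (μ * a))⁻¹ * Real.exp (μ * a) := by
        rw [Real.exp_neg]
        have := Real.exp_pos (μ * a)
        field_simp
        ring
      rw [← this, hc]
      push_cast
      ring_nf
    have h1 : 1 / (1 + Real.exp (μ * a)) =
        1 - (1 + Real.exp (μ * a))⁻¹ * Real.exp (μ * a) := by
      have := Real.exp_pos (μ * a)
      field_simp
      ring
    rw [h1, hc']
    push_cast
    field_simp
    simp
  rw [hval] at hlim
  exact_mod_cast (Complex.continuous_re.tendsto _).comp hlim

lemma integral_density_mul_eq_integral_logKernel {μ : ℝ} (hμ : μ ∈ Set.Ioo (0 : ℝ) 1) (a : ℝ)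
    (hd : IntegrableOn (fun y => Real.sin (π * μ) / (π * μ) *
      (1 / (y ^ 2 + 2 * y * Real.cos (π * μ) + 1))) (Set.Ioi 0)) :
    Integrable (logKernel μ a) ∧
      ∫ y in Set.Ioi (0 : ℝ), (Real.sin (π * μ) / (π * μ) *
        (1 / (y ^ 2 + 2 * y * Real.cos (π * μ) + 1))) * (1 / (1 + Real.exp a * y ^ (1 / μ))) =
      ∫ t, logKernel μ a t := by
  have hμ0 : 0 < μ := hμ.1
  have himage : (fun t : ℝ => Real.exp (μ * t)) '' Set.univ = Set.Ioi 0 := by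
    ext y
    simp only [Set.image_univ, Set.mem_range, Set.mem_Ioi]
    refine ⟨fun ⟨t, ht⟩ => ht ▸ Real.exp_pos _, fun hy => ⟨Real.log y / μ, ?_⟩⟩
    rw [mul_div_cancel₀ _ hμ0.ne', Real.exp_log hy]
  have hderiv : ∀ t ∈ (Set.univ : Set ℝ),
      HasDerivWithinAt (fun t => Real.exp (μ * t)) (μ * Real.exp (μ * t)) Set.univ t := by
    intro t _
    have := ((hasDerivAt_id t).const_mul μ).exp
    exact (this.congr_deriv (by simp [mul_comm])).hasDerivWithinAt
  have hinj : Set.InjOn (fun t : ℝ => Real.exp (μ * t)) Set.univ := by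
    intro x _ y _ hxy
    exact mul_left_cancel₀ hμ0.ne' (Real.exp_injective hxy)
  have hkernel : ∀ t : ℝ, |μ * Real.exp (μ * t)| • ((Real.sin (π * μ) / (π * μ) *
      (1 / (Real.exp (μ * t) ^ 2 + 2 * Real.exp (μ * t) * Real.cos (π * μ) + 1))) *
        (1 / (1 + Real.exp a * Real.exp (μ * t) ^ (1 / μ)))) = logKernel μ a t := by
    intro t
    have hpow : Real.exp (μ * t) ^ (1 / μ) = Real.exp t := by
      rw [← Real.exp_mul]
      congr 1
      field_simp
    rw [hpow, ← Real.exp_add, abs_of_pos (by positivity), smul_eq_mul, logKernel]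
    field_simp
  have hint : IntegrableOn (fun y => (Real.sin (π * μ) / (π * μ) *
      (1 / (y ^ 2 + 2 * y * Real.cos (π * μ) + 1))) * (1 / (1 + Real.exp a * y ^ (1 / μ))))
      (Set.Ioi 0) := by
    refine hd.mul_bdd (c := 1) (Measurable.aestronglyMeasurable (by fun_prop)) ?_
    refine ae_restrict_of_forall_mem measurableSet_Ioi fun y (hy : 0 < y) => ?_
    have : 0 < Real.exp a * y ^ (1 / μ) := by positivity
    rw [Real.norm_of_nonneg (by positivity), div_le_one (by positivity)]
    linarith
  constructor
  · rw [← himage, integrableOn_image_iff_integrableOn_abs_deriv_smul MeasurableSet.univ hderiv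
      hinj] at hint
    simpa only [hkernel, integrableOn_univ] using hint
  · rw [← himage, integral_image_eq_integral_abs_deriv_smul MeasurableSet.univ hderiv hinj]
    simp only [hkernel, Measure.restrict_univ]

theorem stieltjes_transform_of_stable_ratio
    {Ω : Type*} [MeasurableSpace Ω] (P : Measure Ω) [IsProbabilityMeasure P]
    (μ : ℝ) (hμ : μ ∈ Set.Ioo (0:ℝ) 1)
    (X : Ω → ℝ) (hX : Measurable X) (hXpos : ∀ ω, 0 ≤ X ω)
    (hlaw : P.map (fun ω => X ω ^ μ) =
      (volume.restrict (Set.Ici (0:ℝ))).withDensity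
        (fun y => ENNReal.ofReal (Real.sin (π * μ) / (π * μ) *
          (1 / (y ^ 2 + 2 * y * Real.cos (π * μ) + 1))))) :
    ∀ s : ℝ, 0 ≤ s → ∫ ω, 1 / (1 + s * X ω) ∂P = 1 / (1 + s ^ μ) := by
  intro s hs
  have hμ0 : 0 < μ := hμ.1
  rcases hs.eq_or_lt with rfl | hs
  · simp [Real.zero_rpow hμ0.ne']
  obtain ⟨a, rfl⟩ : ∃ a, Real.exp a = s := ⟨Real.log s, Real.exp_log hs⟩
  have hdpos : ∀ y : ℝ, 0 ≤ Real.sin (π * μ) / (π * μ) *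
      (1 / (y ^ 2 + 2 * y * Real.cos (π * μ) + 1)) := by
    intro y
    have h1 : 0 ≤ Real.sin (π * μ) :=
      sin_nonneg_of_nonneg_of_le_pi (by positivity) (by nlinarith [pi_pos, hμ.2])
    have h2 := quadratic_pos hμ y
    positivity
  have hmeas : Measurable fun ω => X ω ^ μ := by fun_prop
  have hd : IntegrableOn (fun y => Real.sin (π * μ) / (π * μ) *
      (1 / (y ^ 2 + 2 * y * Real.cos (π * μ) + 1))) (Set.Ici 0) := by
    refine ⟨Measurable.aestronglyMeasurable (by fun_prop), ?_⟩
    rw [hasFiniteIntegral_iff_ofReal (.of_forall hdpos), ← setLIntegral_univ,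
      ← withDensity_apply _ MeasurableSet.univ, ← hlaw]
    have := Measure.isProbabilityMeasure_map (μ := P) hmeas.aemeasurable
    exact measure_lt_top _ _
  obtain ⟨hint, heq⟩ := integral_density_mul_eq_integral_logKernel hμ a
    (hd.mono_set Set.Ioi_subset_Ici_self)
  have hlim := tendsto_nhds_unique
    (intervalIntegral_tendsto_integral hint tendsto_neg_atTop_atBot tendsto_id)
    (tendsto_integral_logKernel hμ a)
  calc ∫ ω, 1 / (1 + Real.exp a * X ω) ∂P
      = ∫ ω, (fun y : ℝ => 1 / (1 + Real.exp a * y ^ (1 / μ))) (X ω ^ μ) ∂P := by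
        refine integral_congr_ae (.of_forall fun ω => ?_)
        simp only [one_div, Real.rpow_rpow_inv (hXpos ω) hμ0.ne']
    _ = ∫ y, 1 / (1 + Real.exp a * y ^ (1 / μ)) ∂(P.map fun ω => X ω ^ μ) :=
        (integral_map (f := fun y : ℝ => 1 / (1 + Real.exp a * y ^ (1 / μ))) hmeas.aemeasurable
          (Measurable.aestronglyMeasurable (by fun_prop))).symm
    _ = ∫ t, logKernel μ a t := by
        rw [hlaw, integral_withDensity_eq_integral_toReal_smul (by fun_prop)
          (.of_forall fun _ => ENNReal.ofReal_lt_top), ← heq, integral_Ici_eq_integral_Ioi]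
        simp only [ENNReal.toReal_ofReal (hdpos _), smul_eq_mul]
    _ = 1 / (1 + Real.exp a ^ μ) := by
        rw [hlim, ← Real.exp_mul, mul_comm]
end

section
/- Let μ ∈ (0,1) and let X be a nonnegative random variable such that X^μ has density y ↦ (sin(πμ)/(πμ)) · 1/(y² + 2y cos(πμ) + 1) on [0,∞). Then for every s with 0 < s < μ, E[X^s] = sin(πs)/(μ sin(πs/μ)). -/
open MeasureTheory Real
open Set Filter Topology

theorem lintegral_rpow_div_one_add {a : ℝ} (ha : a ∈ Ioo (0 : ℝ) 1) :
    ∫⁻ y in Ioi (0 : ℝ), ENNReal.ofReal (y ^ (a - 1) / (1 + y)) =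
      ENNReal.ofReal (π / sin (π * a)) := by
  obtain ⟨ha0, ha1⟩ := ha
  have inner_t : ∀ y ∈ Ioi (0 : ℝ), ENNReal.ofReal (y ^ (a - 1) / (1 + y)) =
      ∫⁻ t in Ioi (0 : ℝ), ENNReal.ofReal (y ^ (a - 1) * exp (-(1 + y) * t)) := by
    intro y (hy : 0 < y)
    have hlt : -(1 + y) < 0 := by linarith
    rw [← ofReal_integral_eq_lintegral_ofReal
      ((integrableOn_exp_mul_Ioi hlt 0).const_mul _) (ae_of_all _ fun t => by positivity),
      integral_const_mul, integral_exp_mul_Ioi hlt, mul_zero, exp_zero, neg_div_neg_eq,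
      mul_one_div]
  have inner_y : ∀ t ∈ Ioi (0 : ℝ),
      ∫⁻ y in Ioi (0 : ℝ), ENNReal.ofReal (y ^ (a - 1) * exp (-(1 + y) * t)) =
        ENNReal.ofReal (Gamma a * (exp (-t) * t ^ ((1 - a) - 1))) := by
    intro t (ht : 0 < t)
    have key := integral_rpow_mul_exp_neg_mul_Ioi ha0 ht
    have hpos : 0 < Gamma a := Gamma_pos_of_pos ha0
    have hint : IntegrableOn (fun y ↦ y ^ (a - 1) * exp (-(t * y))) (Ioi 0) :=
      .of_integral_ne_zero (by rw [key]; positivity)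
    have hexp : ∀ y : ℝ, y ^ (a - 1) * exp (-(1 + y) * t) =
        exp (-t) * (y ^ (a - 1) * exp (-(t * y))) := by
      intro y
      rw [mul_left_comm, ← exp_add]
      ring_nf
    simp_rw [hexp]
    rw [← ofReal_integral_eq_lintegral_ofReal (hint.const_mul _), integral_const_mul, key,
      one_div, inv_rpow ht.le, ← rpow_neg ht.le]
    · ring_nf
    · filter_upwards [ae_restrict_mem measurableSet_Ioi] with y hy
      have : 0 < y := hy
      simp only [Pi.zero_apply]
      positivity
  rw [setLIntegral_congr_fun measurableSet_Ioi inner_t, lintegral_lintegral_swap,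
    setLIntegral_congr_fun measurableSet_Ioi inner_y,
    ← ofReal_integral_eq_lintegral_ofReal
      ((GammaIntegral_convergent (by linarith : 0 < 1 - a)).const_mul _),
    integral_const_mul, ← Gamma_eq_integral (by linarith), Gamma_mul_Gamma_one_sub]
  · filter_upwards [ae_restrict_mem measurableSet_Ioi] with y hy
    have : 0 < y := hy
    have := Gamma_pos_of_pos ha0
    simp only [Pi.zero_apply]
    positivity
  · refine Measurable.aemeasurable ?_
    simp only [Function.uncurry_def]
    fun_prop

theorem rpow_div_one_add_nonneg_ae (a : ℝ) :
    0 ≤ᵐ[volume.restrict (Ioi (0 : ℝ))] fun y : ℝ => y ^ (a - 1) / (1 + y) := by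
  filter_upwards [ae_restrict_mem measurableSet_Ioi] with y hy
  have : 0 < y := hy
  simp only [Pi.zero_apply]
  positivity

theorem integrableOn_rpow_div_one_add {a : ℝ} (ha : a ∈ Ioo (0 : ℝ) 1) :
    IntegrableOn (fun y : ℝ => y ^ (a - 1) / (1 + y)) (Ioi 0) := by
  refine ⟨(by fun_prop : Measurable _).aestronglyMeasurable, ?_⟩
  rw [hasFiniteIntegral_iff_ofReal (rpow_div_one_add_nonneg_ae a), lintegral_rpow_div_one_add ha]
  exact ENNReal.ofReal_lt_top

theorem integral_rpow_div_one_add {a : ℝ} (ha : a ∈ Ioo (0 : ℝ) 1) :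
    ∫ y in Ioi (0 : ℝ), y ^ (a - 1) / (1 + y) = π / sin (π * a) := by
  rw [integral_eq_lintegral_of_nonneg_ae (rpow_div_one_add_nonneg_ae a)
      (by fun_prop : Measurable _).aestronglyMeasurable,
    lintegral_rpow_div_one_add ha, ENNReal.toReal_ofReal]
  refine div_nonneg pi_pos.le (sin_nonneg_of_nonneg_of_le_pi ?_ ?_) <;>
    nlinarith [pi_pos, ha.1, ha.2]

theorem normSq_add_exp_mul_I (y θ : ℝ) :
    Complex.normSq (y + Complex.exp (θ * Complex.I)) = y ^ 2 + 2 * y * cos θ + 1 := by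
  rw [Complex.normSq_apply]
  simp only [Complex.add_re, Complex.add_im, Complex.ofReal_re, Complex.ofReal_im,
    Complex.exp_ofReal_mul_I_re, Complex.exp_ofReal_mul_I_im]
  linear_combination sin_sq_add_cos_sq θ

theorem exists_pos_mul_one_add_le_norm_add_exp {r : ℝ} (hr0 : 0 ≤ r) (hr : r < π) :
    ∃ k > 0, ∀ θ ∈ Ioo (-r) r, ∀ y : ℝ, 0 ≤ y →
      k * (1 + y) ≤ ‖(y : ℂ) + Complex.exp (θ * Complex.I)‖ := by
  have hc : -1 < cos r := by
    rw [← cos_pi]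
    exact cos_lt_cos_of_nonneg_of_le_pi hr0 le_rfl hr
  refine ⟨√((1 + cos r) / 2), sqrt_pos.2 (by linarith), fun θ hθ y hy => ?_⟩
  have hcos : cos r ≤ cos θ := by
    rw [← cos_abs θ]
    exact cos_le_cos_of_nonneg_of_le_pi (abs_nonneg θ) hr.le (abs_lt.2 hθ).le
  refine abs_le_of_sq_le_sq' ?_ (norm_nonneg _) |>.2
  rw [← Complex.normSq_eq_norm_sq, normSq_add_exp_mul_I, mul_pow, sq_sqrt (by linarith)]
  nlinarith [mul_le_mul_of_nonneg_left hcos hy, mul_nonneg (sub_nonneg.2 (cos_le_one r))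
    (sq_nonneg (1 - y))]

/-- The integrand of the Stieltjes transform of `y ^ (a - 1)` at `exp (θ * I)`, multiplied by the
phase that makes its integral independent of `θ`. -/
noncomputable def rotatedStieltjesKernel (a θ y : ℝ) : ℂ :=
  (y ^ (a - 1) : ℝ) * Complex.exp ((1 - a) * θ * Complex.I) /
    (y + Complex.exp (θ * Complex.I))

/-- The derivative of `rotatedStieltjesKernel a θ y` in `θ`. -/
noncomputable def rotatedStieltjesKernelDeriv (a θ y : ℝ) : ℂ :=
  (y ^ (a - 1) : ℝ) * Complex.exp ((1 - a) * θ * Complex.I) * Complex.I *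
    ((1 - a) / (y + Complex.exp (θ * Complex.I)) -
      Complex.exp (θ * Complex.I) / (y + Complex.exp (θ * Complex.I)) ^ 2)

theorem measurable_rotatedStieltjesKernel (a θ : ℝ) :
    Measurable (rotatedStieltjesKernel a θ) := by
  unfold rotatedStieltjesKernel
  fun_prop

theorem measurable_rotatedStieltjesKernelDeriv (a θ : ℝ) :
    Measurable (rotatedStieltjesKernelDeriv a θ) := by
  unfold rotatedStieltjesKernelDeriv
  fun_prop

theorem hasDerivAt_rotatedStieltjesKernel (a θ y : ℝ)
    (h : (y : ℂ) + Complex.exp (θ * Complex.I) ≠ 0) :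
    HasDerivAt (rotatedStieltjesKernel a · y) (rotatedStieltjesKernelDeriv a θ y) θ := by
  have h1 : HasDerivAt (fun θ : ℝ => Complex.exp ((1 - a) * θ * Complex.I))
      (Complex.exp ((1 - a) * θ * Complex.I) * ((1 - a) * 1 * Complex.I)) θ :=
    (((hasDerivAt_id θ).ofReal_comp.const_mul (1 - a : ℂ)).mul_const Complex.I).cexp
  have h2 : HasDerivAt (fun θ : ℝ => (y : ℂ) + Complex.exp (θ * Complex.I))
      (Complex.exp (θ * Complex.I) * (1 * Complex.I)) θ :=
    (((hasDerivAt_id θ).ofReal_comp.mul_const Complex.I).cexp).const_add _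
  refine ((h1.const_mul ((y ^ (a - 1) : ℝ) : ℂ)).div h2 h).congr_deriv ?_
  rw [rotatedStieltjesKernelDeriv]
  field_simp

theorem hasDerivAt_id_mul_rotatedStieltjesKernel (a θ y : ℝ) (hy : 0 < y)
    (h : (y : ℂ) + Complex.exp (θ * Complex.I) ≠ 0) :
    HasDerivAt (fun y : ℝ => (y ^ a : ℝ) * Complex.exp ((1 - a) * θ * Complex.I) /
      (y + Complex.exp (θ * Complex.I)))
      (Complex.I * rotatedStieltjesKernelDeriv a θ y) y := by
  have h1 : HasDerivAt (fun y : ℝ => ((y ^ a : ℝ) : ℂ)) ((a * y ^ (a - 1) : ℝ) : ℂ) y :=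
    (hasDerivAt_rpow_const (Or.inl hy.ne')).ofReal_comp
  have h2 : HasDerivAt (fun y : ℝ => (y : ℂ) + Complex.exp (θ * Complex.I)) 1 y :=
    (hasDerivAt_id y).ofReal_comp.add_const _
  refine ((h1.mul_const _).div h2 h).congr_deriv ?_
  have hya : y ^ a = y ^ (a - 1) * y := by
    rw [← rpow_add_one hy.ne']; ring_nf
  rw [rotatedStieltjesKernelDeriv, hya]
  push_cast
  field_simp
  ring_nf
  simp only [Complex.I_sq]
  ring

theorem integrableOn_rotatedStieltjesKernel {a θ : ℝ} (ha : a ∈ Ioo (0 : ℝ) 1)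
    (hθ : θ ∈ Ioo (-π) π) : IntegrableOn (rotatedStieltjesKernel a θ) (Ioi 0) := by
  obtain ⟨r, hr, hrπ⟩ := exists_between (abs_lt.2 hθ)
  obtain ⟨k, hk, hbound⟩ :=
    exists_pos_mul_one_add_le_norm_add_exp ((abs_nonneg θ).trans hr.le) hrπ
  refine ((integrableOn_rpow_div_one_add ha).const_mul (1 / k)).mono'
    (measurable_rotatedStieltjesKernel a θ).aestronglyMeasurable ?_
  filter_upwards [ae_restrict_mem measurableSet_Ioi] with y hy
  have hy0 : 0 < y := hy
  have hexp : ‖Complex.exp ((1 - a) * θ * Complex.I)‖ = 1 := by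
    exact_mod_cast Complex.norm_exp_ofReal_mul_I ((1 - a) * θ)
  rw [rotatedStieltjesKernel, norm_div, norm_mul, hexp, mul_one, Complex.norm_real,
    norm_of_nonneg (by positivity)]
  calc y ^ (a - 1) / _ ≤ y ^ (a - 1) / (k * (1 + y)) := by
        gcongr
        exact hbound θ (abs_lt.1 hr) y hy0.le
    _ = 1 / k * (y ^ (a - 1) / (1 + y)) := by field_simp

theorem norm_rotatedStieltjesKernelDeriv_le {a θ y k : ℝ} (ha : a ∈ Ioo (0 : ℝ) 1)
    (hy : 0 < y) (hk : 0 < k) (h : k * (1 + y) ≤ ‖(y : ℂ) + Complex.exp (θ * Complex.I)‖) :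
    ‖rotatedStieltjesKernelDeriv a θ y‖ ≤ (1 / k + 1 / k ^ 2) * (y ^ (a - 1) / (1 + y)) := by
  have hexp : ‖Complex.exp ((1 - a) * θ * Complex.I)‖ = 1 := by
    exact_mod_cast Complex.norm_exp_ofReal_mul_I ((1 - a) * θ)
  have hone : ‖(1 - a : ℂ)‖ ≤ 1 := by
    rw [← Complex.ofReal_one, ← Complex.ofReal_sub, Complex.norm_real,
      norm_of_nonneg (by linarith [ha.2])]
    linarith [ha.1]
  rw [rotatedStieltjesKernelDeriv, norm_mul, norm_mul, norm_mul, hexp, Complex.norm_I, mul_one,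
    mul_one, Complex.norm_real, norm_of_nonneg (by positivity)]
  have hsub : ‖(1 - a) / ((y : ℂ) + Complex.exp (θ * Complex.I)) -
      Complex.exp (θ * Complex.I) / (y + Complex.exp (θ * Complex.I)) ^ 2‖ ≤
      1 / (k * (1 + y)) + 1 / (k * (1 + y)) ^ 2 := by
    refine (norm_sub_le _ _).trans (add_le_add ?_ ?_)
    · rw [norm_div]; gcongr
    · rw [norm_div, norm_pow, Complex.norm_exp_ofReal_mul_I]; gcongr
  calc _ ≤ y ^ (a - 1) * (1 / (k * (1 + y)) + 1 / (k * (1 + y)) ^ 2) := by gcongr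
    _ ≤ y ^ (a - 1) * (1 / (k * (1 + y)) + 1 / (k ^ 2 * (1 + y))) := by
        rw [mul_pow]
        gcongr
        nlinarith
    _ = _ := by field_simp

theorem integral_rotatedStieltjesKernelDeriv {a θ : ℝ} (ha : a ∈ Ioo (0 : ℝ) 1)
    (hθ : θ ∈ Ioo (-π) π)
    (hint : IntegrableOn (rotatedStieltjesKernelDeriv a θ) (Ioi 0)) :
    ∫ y in Ioi (0 : ℝ), rotatedStieltjesKernelDeriv a θ y = 0 := by
  obtain ⟨r, hr, hrπ⟩ := exists_between (abs_lt.2 hθ)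
  obtain ⟨k, hk, hbound⟩ :=
    exists_pos_mul_one_add_le_norm_add_exp ((abs_nonneg θ).trans hr.le) hrπ
  have hlow : ∀ y : ℝ, 0 ≤ y → k * (1 + y) ≤ ‖(y : ℂ) + Complex.exp (θ * Complex.I)‖ :=
    hbound θ (abs_lt.1 hr)
  have hne : ∀ y : ℝ, 0 ≤ y → (y : ℂ) + Complex.exp (θ * Complex.I) ≠ 0 := fun y hy =>
    norm_pos_iff.1 ((by positivity : 0 < k * (1 + y)).trans_le (hlow y hy))
  have hexp : ‖Complex.exp ((1 - a) * θ * Complex.I)‖ = 1 := by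
    exact_mod_cast Complex.norm_exp_ofReal_mul_I ((1 - a) * θ)
  have key := integral_Ioi_of_hasDerivAt_of_tendsto (a := 0) (m := 0)
    (f := fun y : ℝ => (y ^ a : ℝ) * Complex.exp ((1 - a) * θ * Complex.I) /
      (y + Complex.exp (θ * Complex.I)))
    (f' := fun y => Complex.I * rotatedStieltjesKernelDeriv a θ y) ?_
    (fun y hy => hasDerivAt_id_mul_rotatedStieltjesKernel a θ y hy (hne y (le_of_lt hy)))
    (hint.const_mul _) ?_
  · simpa [integral_const_mul, zero_rpow ha.1.ne'] using key
  · refine ContinuousAt.continuousWithinAt (.div (.mul ?_ ?_) ?_ (hne 0 le_rfl))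
    · exact Complex.continuous_ofReal.continuousAt.comp
        (continuousAt_rpow_const _ _ (Or.inr ha.1.le))
    · fun_prop
    · fun_prop
  · have hlim : Tendsto (fun y : ℝ => 1 / k * y ^ (-(1 - a))) atTop (𝓝 0) := by
      simpa using (tendsto_rpow_neg_atTop (by linarith [ha.2] : 0 < 1 - a)).const_mul (1 / k)
    refine squeeze_zero_norm' ?_ hlim
    filter_upwards [eventually_gt_atTop 0] with y hy
    rw [norm_div, norm_mul, hexp, mul_one, Complex.norm_real, norm_of_nonneg (by positivity)]
    calc y ^ a / _ ≤ y ^ a / (k * y) := by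
          gcongr
          nlinarith [hlow y hy.le]
      _ = 1 / k * y ^ (-(1 - a)) := by
          rw [neg_sub, rpow_sub_one hy.ne']; field_simp

theorem hasDerivAt_integral_rotatedStieltjesKernel {a θ : ℝ} (ha : a ∈ Ioo (0 : ℝ) 1)
    (hθ : θ ∈ Ioo (-π) π) :
    HasDerivAt (fun θ => ∫ y in Ioi (0 : ℝ), rotatedStieltjesKernel a θ y) 0 θ := by
  obtain ⟨r, hr, hrπ⟩ := exists_between (abs_lt.2 hθ)
  obtain ⟨k, hk, hbound⟩ :=
    exists_pos_mul_one_add_le_norm_add_exp ((abs_nonneg θ).trans hr.le) hrπ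
  obtain ⟨hint, hderiv⟩ := hasDerivAt_integral_of_dominated_loc_of_deriv_le
    (μ := volume.restrict (Ioi (0 : ℝ))) (F := rotatedStieltjesKernel a)
    (F' := rotatedStieltjesKernelDeriv a)
    (bound := fun y => (1 / k + 1 / k ^ 2) * (y ^ (a - 1) / (1 + y)))
    (isOpen_Ioo.mem_nhds (abs_lt.1 hr))
    (.of_forall fun x => (measurable_rotatedStieltjesKernel a x).aestronglyMeasurable)
    (integrableOn_rotatedStieltjesKernel ha hθ)
    (measurable_rotatedStieltjesKernelDeriv a θ).aestronglyMeasurable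
    (by
      filter_upwards [ae_restrict_mem measurableSet_Ioi] with y hy x hx
      exact norm_rotatedStieltjesKernelDeriv_le ha hy hk (hbound x hx y (le_of_lt hy)))
    ((integrableOn_rpow_div_one_add ha).const_mul _)
    (by
      filter_upwards [ae_restrict_mem measurableSet_Ioi] with y hy x hx
      have hy0 : 0 < y := hy
      exact hasDerivAt_rotatedStieltjesKernel a x y (norm_pos_iff.1
        ((by positivity : 0 < k * (1 + y)).trans_le (hbound x hx y hy0.le))))
  rwa [integral_rotatedStieltjesKernelDeriv ha hθ hint] at hderiv

theorem integral_rotatedStieltjesKernel {a θ : ℝ} (ha : a ∈ Ioo (0 : ℝ) 1)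
    (hθ : θ ∈ Ioo (-π) π) :
    ∫ y in Ioi (0 : ℝ), rotatedStieltjesKernel a θ y = (π / sin (π * a) : ℝ) := by
  have hconst := isOpen_Ioo.is_const_of_deriv_eq_zero isPreconnected_Ioo
    (fun x hx => (hasDerivAt_integral_rotatedStieltjesKernel ha
      hx).differentiableAt.differentiableWithinAt)
    (fun x hx => (hasDerivAt_integral_rotatedStieltjesKernel ha hx).deriv) hθ
    (⟨neg_lt_zero.2 pi_pos, pi_pos⟩ : (0 : ℝ) ∈ Ioo (-π) π)
  rw [hconst, ← integral_rpow_div_one_add ha, ← integral_complex_ofReal]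
  congr 1 with y
  simp [rotatedStieltjesKernel, add_comm]

theorem integral_rpow_mul_sin_div {a θ : ℝ} (ha : a ∈ Ioo (0 : ℝ) 1) (hθ : θ ∈ Ioo (-π) π) :
    ∫ y in Ioi (0 : ℝ), y ^ a * (sin θ / (y ^ 2 + 2 * y * cos θ + 1)) =
      sin (a * θ) * (π / sin (π * a)) := by
  have him : ∀ y ∈ Ioi (0 : ℝ), y ^ a * (sin θ / (y ^ 2 + 2 * y * cos θ + 1)) =
      (Complex.exp ((a * θ : ℝ) * Complex.I) * rotatedStieltjesKernel a θ y).im := by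
    intro y (hy : 0 < y)
    have hexp : Complex.exp ((a * θ : ℝ) * Complex.I) *
        Complex.exp ((1 - a) * θ * Complex.I) = Complex.exp (θ * Complex.I) := by
      rw [← Complex.exp_add]; push_cast; ring_nf
    have hmul : Complex.exp ((a * θ : ℝ) * Complex.I) * rotatedStieltjesKernel a θ y =
        (y ^ (a - 1) : ℝ) *
          (Complex.exp (θ * Complex.I) / (y + Complex.exp (θ * Complex.I))) := by
      rw [rotatedStieltjesKernel, ← hexp]; ring
    have hya : y ^ a = y ^ (a - 1) * y := by
      rw [← rpow_add_one hy.ne']; ring_nf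
    rw [hmul, Complex.im_ofReal_mul, Complex.div_im, normSq_add_exp_mul_I, hya]
    simp only [Complex.add_re, Complex.add_im, Complex.ofReal_re, Complex.ofReal_im,
      Complex.exp_ofReal_mul_I_re, Complex.exp_ofReal_mul_I_im]
    ring
  have hint := (integrableOn_rotatedStieltjesKernel ha hθ).const_mul
    (Complex.exp ((a * θ : ℝ) * Complex.I))
  rw [setIntegral_congr_fun measurableSet_Ioi him]
  refine (integral_im hint).trans ?_
  rw [integral_const_mul, integral_rotatedStieltjesKernel ha hθ]
  change (Complex.exp ((a * θ : ℝ) * Complex.I) * ((π / sin (π * a) : ℝ) : ℂ)).im = _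
  rw [Complex.im_mul_ofReal, Complex.exp_ofReal_mul_I_im]

theorem mellin_transform_of_stable_ratio
    {Ω : Type*} [MeasurableSpace Ω] (P : Measure Ω) [IsProbabilityMeasure P]
    (μ : ℝ) (hμ : μ ∈ Set.Ioo (0:ℝ) 1)
    (X : Ω → ℝ) (hX : Measurable X) (hXpos : ∀ ω, 0 ≤ X ω)
    (hlaw : P.map (fun ω => X ω ^ μ) =
      (volume.restrict (Set.Ici (0:ℝ))).withDensity
        (fun y => ENNReal.ofReal (Real.sin (π * μ) / (π * μ) *
          (1 / (y ^ 2 + 2 * y * Real.cos (π * μ) + 1))))) :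
    ∀ s : ℝ, 0 < s → s < μ →
      ∫ ω, (X ω) ^ s ∂P = Real.sin (π * s) / (μ * Real.sin (π * s / μ)) := by
  intro s hs0 hsμ
  obtain ⟨hμ0, hμ1⟩ := hμ
  have ha : s / μ ∈ Ioo (0 : ℝ) 1 := ⟨by positivity, (div_lt_one hμ0).2 hsμ⟩
  have hθ : π * μ ∈ Ioo (-π) π := ⟨by nlinarith [pi_pos], by nlinarith [pi_pos]⟩
  have hsin : 0 ≤ sin (π * μ) :=
    sin_nonneg_of_nonneg_of_le_pi (by positivity) hθ.2.le
  have hdens : ∀ y : ℝ, 0 ≤ sin (π * μ) / (π * μ) *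
      (1 / (y ^ 2 + 2 * y * cos (π * μ) + 1)) := fun y => by
    rw [← normSq_add_exp_mul_I]
    exact mul_nonneg (by positivity) (one_div_nonneg.2 (Complex.normSq_nonneg _))
  have hpow : ∀ ω, X ω ^ s = (X ω ^ μ) ^ (s / μ) := fun ω => by
    rw [← rpow_mul (hXpos ω), mul_div_cancel₀ _ hμ0.ne']
  calc ∫ ω, X ω ^ s ∂P = ∫ y, y ^ (s / μ) ∂(P.map fun ω => X ω ^ μ) := by
        rw [integral_map (by fun_prop) (by fun_prop : Measurable _).aestronglyMeasurable]
        simp_rw [hpow]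
    _ = ∫ y in Ioi (0 : ℝ), (1 / (π * μ)) *
          (y ^ (s / μ) * (sin (π * μ) / (y ^ 2 + 2 * y * cos (π * μ) + 1))) := by
        rw [hlaw, integral_withDensity_eq_integral_toReal_smul (by fun_prop)
          (ae_of_all _ fun _ => ENNReal.ofReal_lt_top), integral_Ici_eq_integral_Ioi]
        refine integral_congr_ae (ae_of_all _ fun y => ?_)
        simp only [smul_eq_mul, ENNReal.toReal_ofReal (hdens y)]
        ring
    _ = 1 / (π * μ) * (sin (π * s) * (π / sin (π * s / μ))) := by
        rw [integral_const_mul, integral_rpow_mul_sin_div ha hθ]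
        congr 3
        · field_simp
        · rw [mul_div_assoc]
    _ = sin (π * s) / (μ * sin (π * s / μ)) := by
        field_simp
end

section
/- For μ ∈ (0,1) and any s ≥ 0, the integral identity ∫₀^∞ (sin(πμ)/(πμ)) · 1/(y² + 2y cos(πμ) + 1) · 1/(1 + s·y^{1/μ}) dy = 1/(1+s^μ) holds. -/
open MeasureTheory Real
open Filter Topology

theorem tendsto_intervalIntegral_vertical {G : ℂ → ℂ} {c : ℝ} {l : ℂ} {u : ℝ → ℝ} {F : Filter ℝ}
    (hu : Tendsto u atTop F) (hc : 0 ≤ c)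
    (hcont : ContinuousOn G {w | |w.im| ≤ c}) (hG : Tendsto G (comap Complex.re F) (𝓝 l)) :
    Tendsto (fun R : ℝ => ∫ y in (-c)..c, G (u R + y * Complex.I)) atTop (𝓝 (2 * c * l)) := by
  have hcst : (∫ y in (-c)..c, l) = 2 * c * l := by
    rw [intervalIntegral.integral_const, Complex.real_smul]; push_cast; ring
  rw [← hcst, Metric.tendsto_nhds]
  intro ε hε
  have hδ : 0 < ε / (2 * c + 1) := by positivity
  have h1 := hu.eventually (eventually_comap.1 (Metric.tendsto_nhds.1 hG _ hδ))
  filter_upwards [h1] with R hR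
  have hint : IntervalIntegrable (fun y : ℝ => G (u R + y * Complex.I)) volume (-c) c := by
    apply ContinuousOn.intervalIntegrable
    apply hcont.comp (by fun_prop)
    intro y hy
    rw [Set.uIcc_of_le (by linarith)] at hy
    simpa [abs_le] using hy
  rw [dist_eq_norm, ← intervalIntegral.integral_sub hint (by simp)]
  calc _ ≤ ε / (2 * c + 1) * |c - -c| := by
        apply intervalIntegral.norm_integral_le_of_norm_le_const
        intro y _
        rw [← dist_eq_norm]
        exact (hR _ (by simp)).le
    _ < ε := by
        rw [abs_of_nonneg (by linarith), div_mul_eq_mul_div, div_lt_iff₀ (by positivity)]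
        nlinarith

/-- Cauchy's theorem on a horizontal strip, for a function with limits at both ends. -/
theorem tendsto_intervalIntegral_strip_jump {G : ℂ → ℂ} {c : ℝ} {l r : ℂ} (hc : 0 ≤ c)
    (hG : DifferentiableOn ℂ G {w | |w.im| ≤ c})
    (hr : Tendsto G (comap Complex.re atTop) (𝓝 r))
    (hl : Tendsto G (comap Complex.re atBot) (𝓝 l)) :
    Tendsto (fun R : ℝ => ∫ x in (-R)..R, (G (x - c * Complex.I) - G (x + c * Complex.I))) atTop
      (𝓝 (2 * c * Complex.I * (l - r))) := by
  have h1 := tendsto_intervalIntegral_vertical tendsto_id hc hG.continuousOn hr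
  have h2 := tendsto_intervalIntegral_vertical tendsto_neg_atTop_atBot hc hG.continuousOn hl
  have h3 := (h2.sub h1).const_mul Complex.I
  have e : Complex.I * (2 * c * l - 2 * c * r) = 2 * c * Complex.I * (l - r) := by ring
  rw [e] at h3
  refine h3.congr fun R => ?_
  have key := Complex.integral_boundary_rect_eq_zero_of_differentiableOn G
    (⟨-R, -c⟩ : ℂ) (⟨R, c⟩ : ℂ) (hG.mono (by
      intro w hw
      have := hw.2
      simp only [Set.mem_preimage] at this
      rw [Set.uIcc_of_le (by linarith)] at this
      simpa [abs_le] using this))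
  have i1 : IntervalIntegrable (fun x : ℝ => G (x - c * Complex.I)) volume (-R) R := by
    apply Continuous.intervalIntegrable
    apply hG.continuousOn.comp_continuous (by fun_prop)
    intro x
    simp [abs_of_nonneg hc]
  have i2 : IntervalIntegrable (fun x : ℝ => G (x + c * Complex.I)) volume (-R) R := by
    apply Continuous.intervalIntegrable
    apply hG.continuousOn.comp_continuous (by fun_prop)
    intro x
    simp [abs_of_nonneg hc]
  rw [intervalIntegral.integral_sub i1 i2]
  simp only [smul_eq_mul, Complex.ofReal_neg, neg_mul, ← sub_eq_add_neg] at key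
  simp only [id, Complex.ofReal_neg]
  linear_combination -key

theorem Complex.one_add_exp_ne_zero {z : ℂ} (hz : |z.im| < π) : 1 + Complex.exp z ≠ 0 := by
  intro h
  have h1 : Complex.exp z = -1 := by linear_combination h
  have h2 := Complex.log_exp (abs_lt.1 hz).1 (abs_lt.1 hz).2.le
  rw [h1, Complex.log_neg_one] at h2
  rw [← h2] at hz
  simp [abs_of_pos Real.pi_pos] at hz

theorem Complex.eq_zero_of_exp_eq_one {z : ℂ} (hz : |z.im| ≤ π) (h : Complex.exp z = 1) :
    z = 0 := by
  obtain ⟨n, hn⟩ := Complex.exp_eq_one_iff.1 h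
  have him : z.im = n * (2 * π) := by rw [hn]; simp
  rw [him, abs_mul, abs_of_pos (by positivity : 0 < 2 * π)] at hz
  have h1 : |(n : ℝ)| < 1 := by nlinarith [Real.pi_pos]
  have h2 : n = 0 := by
    rw [← Int.abs_lt_one_iff]; exact_mod_cast h1
  simp [hn, h2]

theorem sq_add_two_mul_cos_add_one_pos {θ : ℝ} (hθ : 0 < Real.sin θ) (y : ℝ) :
    0 < y ^ 2 + 2 * y * Real.cos θ + 1 := by
  nlinarith [sq_nonneg (y + Real.cos θ), Real.sin_sq_add_cos_sq θ, sq_pos_of_pos hθ]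

theorem jump_inv_one_add_exp {μ : ℝ} (h0 : 0 < μ) (h1 : μ < 1) (t : ℝ) :
    (1 + Complex.exp (μ * (t - π * Complex.I)))⁻¹ - (1 + Complex.exp (μ * (t + π * Complex.I)))⁻¹ =
      2 * Complex.I * ((Real.sin (π * μ) * (Real.exp (μ * t) /
        (Real.exp (μ * t) ^ 2 + 2 * Real.exp (μ * t) * Real.cos (π * μ) + 1)) : ℝ) : ℂ) := by
  have hlt : π * μ < π := by nlinarith [Real.pi_pos]
  have hs : 0 < Real.sin (π * μ) := Real.sin_pos_of_pos_of_lt_pi (by positivity) hlt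
  have hD := (sq_add_two_mul_cos_add_one_pos hs (Real.exp (μ * t))).ne'
  have n1 : 1 + Complex.exp (μ * (t - π * Complex.I)) ≠ 0 :=
    Complex.one_add_exp_ne_zero (by
      simpa [abs_of_pos h0, abs_of_pos Real.pi_pos, mul_comm] using hlt)
  have n2 : 1 + Complex.exp (μ * (t + π * Complex.I)) ≠ 0 :=
    Complex.one_add_exp_ne_zero (by
      simpa [abs_of_pos h0, abs_of_pos Real.pi_pos, mul_comm] using hlt)
  have e1 : Complex.exp (μ * (t - π * Complex.I)) = (Real.exp (μ * t) : ℝ) *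
      ((Real.cos (π * μ) : ℝ) - (Real.sin (π * μ) : ℝ) * Complex.I) := by
    rw [show (μ * (t - π * Complex.I) : ℂ) = ((μ * t : ℝ) : ℂ) + ((-(π * μ) : ℝ) : ℂ) * Complex.I by
      push_cast; ring, Complex.exp_add, Complex.exp_mul_I, ← Complex.ofReal_cos,
      ← Complex.ofReal_sin, ← Complex.ofReal_exp, Real.cos_neg, Real.sin_neg]
    push_cast; ring
  have e2 : Complex.exp (μ * (t + π * Complex.I)) = (Real.exp (μ * t) : ℝ) *
      ((Real.cos (π * μ) : ℝ) + (Real.sin (π * μ) : ℝ) * Complex.I) := by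
    rw [show (μ * (t + π * Complex.I) : ℂ) = ((μ * t : ℝ) : ℂ) + ((π * μ : ℝ) : ℂ) * Complex.I by
      push_cast; ring, Complex.exp_add, Complex.exp_mul_I, ← Complex.ofReal_cos,
      ← Complex.ofReal_sin, ← Complex.ofReal_exp]
  have hcs := Real.sin_sq_add_cos_sq (π * μ)
  rw [e1] at n1 ⊢
  rw [e2] at n2 ⊢
  generalize Real.exp (μ * t) = E at *
  generalize Real.sin (π * μ) = S at *
  generalize Real.cos (π * μ) = C at *
  have hcs' : (S : ℂ) ^ 2 + (C : ℂ) ^ 2 = 1 := by exact_mod_cast hcs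
  have hD' : (E : ℂ) ^ 2 + 2 * E * C + 1 ≠ 0 := by exact_mod_cast hD
  have hprod : (1 + E * (C - S * Complex.I) : ℂ) * (1 + E * (C + S * Complex.I)) =
      (E : ℂ) ^ 2 + 2 * E * C + 1 := by
    linear_combination (E : ℂ) ^ 2 * hcs' - (E : ℂ) ^ 2 * S ^ 2 * Complex.I_sq
  rw [inv_sub_inv n1 n2, hprod]
  push_cast
  ring

/-- A holomorphic function on the closed strip whose jump between the two boundary lines is that
of `w ↦ (1 + exp (μ w))⁻¹` divided by `1 + s * exp t`; for `s > 0` it is the quotient of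
`(1 + exp (μ w))⁻¹` minus its value at `-log s` by `1 - s * exp w`, with the singularity at
`-log s` removed. -/
theorem exists_differentiableOn_strip_with_jump {μ s : ℝ} (h0 : 0 < μ) (h1 : μ < 1) (hs : 0 ≤ s) :
    ∃ G : ℂ → ℂ, DifferentiableOn ℂ G {w | |w.im| ≤ π} ∧
      Tendsto G (comap Complex.re atTop) (𝓝 0) ∧
      Tendsto G (comap Complex.re atBot) (𝓝 ((1 / (1 + s ^ μ) : ℝ) : ℂ)) ∧
      ∀ t : ℝ, G (t - π * Complex.I) - G (t + π * Complex.I) =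
        ((1 + Complex.exp (μ * (t - π * Complex.I)))⁻¹ -
          (1 + Complex.exp (μ * (t + π * Complex.I)))⁻¹) * ((1 / (1 + s * Real.exp t) : ℝ) : ℂ) := by
  set g : ℂ → ℂ := fun w => (1 + Complex.exp (μ * w))⁻¹ with hg
  have hgd : DifferentiableOn ℂ g {w | |w.im| ≤ π} := by
    intro w hw
    have : 1 + Complex.exp (μ * w) ≠ 0 := Complex.one_add_exp_ne_zero (by
      simp only [Complex.im_ofReal_mul, abs_mul, abs_of_pos h0]
      have : |w.im| ≤ π := hw
      nlinarith [Real.pi_pos, abs_nonneg w.im])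
    exact DifferentiableAt.differentiableWithinAt (by fun_prop (disch := assumption))
  have hgr : Tendsto g (comap Complex.re atTop) (𝓝 0) := by
    apply tendsto_inv₀_cobounded.comp
    apply (tendsto_const_add_cobounded _).comp
    apply Complex.tendsto_exp_comap_re_atTop.comp
    rw [tendsto_comap_iff]
    refine (tendsto_comap.const_mul_atTop h0).congr fun w => by simp
  have hgl : Tendsto g (comap Complex.re atBot) (𝓝 1) := by
    have : Tendsto (fun w : ℂ => Complex.exp (μ * w)) (comap Complex.re atBot) (𝓝 0) := by
      apply Complex.tendsto_exp_comap_re_atBot.comp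
      rw [tendsto_comap_iff]
      refine (tendsto_comap.const_mul_atBot h0).congr fun w => by simp
    simpa using (this.const_add 1).inv₀ (by simp)
  rcases hs.eq_or_lt with rfl | hs
  · refine ⟨g, hgd, hgr, ?_, fun t => by simp [hg]⟩
    simpa [Real.zero_rpow h0.ne'] using hgl
  set a : ℂ := ((-Real.log s : ℝ) : ℂ) with ha
  have hexpa : Complex.exp (-a) = s := by
    rw [ha, ← Complex.ofReal_neg, neg_neg, ← Complex.ofReal_exp, Real.exp_log hs]
  set E : ℂ → ℂ := fun w => 1 - Complex.exp (w - a) with hE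
  have hE' (w : ℂ) : E w = 1 - s * Complex.exp w := by
    rw [hE]; simp only [sub_eq_add_neg w a, Complex.exp_add, hexpa]; ring
  have hEd : Differentiable ℂ E := by fun_prop
  have hEa : E a = 0 := by simp [hE]
  have haS : {w : ℂ | |w.im| ≤ π} ∈ 𝓝 a := by
    have : ContinuousAt (fun w : ℂ => |w.im|) a := by fun_prop
    refine this.eventually_le_const ?_
    simpa [ha] using Real.pi_pos
  have hEne : ∀ w ∈ {w : ℂ | |w.im| ≤ π}, dslope E a w ≠ 0 := by
    intro w hw
    rcases eq_or_ne w a with rfl | hwa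
    · have : HasDerivAt E (-(Complex.exp (a - a) * 1)) a :=
        (((hasDerivAt_id a).sub_const a).cexp).const_sub 1
      rw [dslope_same, this.deriv]
      simp
    · rw [dslope_of_ne _ hwa, slope_def_field, hEa, sub_zero]
      refine div_ne_zero (fun h => hwa ?_) (sub_ne_zero.2 hwa)
      refine sub_eq_zero.1 (Complex.eq_zero_of_exp_eq_one ?_ ?_)
      · simpa [ha] using hw
      · exact (sub_eq_zero.1 h).symm
  have hGne (w : ℂ) (hw : w ≠ a) : dslope g a w / dslope E a w = (g w - g a) / E w := by
    rw [dslope_of_ne _ hw, dslope_of_ne _ hw, slope_def_field, slope_def_field, hEa, sub_zero,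
      div_div_div_cancel_right₀ (sub_ne_zero.2 hw)]
  refine ⟨fun w => dslope g a w / dslope E a w, ?_, ?_, ?_, ?_⟩
  · exact ((Complex.differentiableOn_dslope haS).2 hgd).div
      ((Complex.differentiableOn_dslope haS).2 hEd.differentiableOn) hEne
  · have hev : ∀ᶠ w in comap Complex.re atTop, w ≠ a := by
      filter_upwards [tendsto_comap.eventually (eventually_gt_atTop a.re)] with w hw h
      simp [h] at hw
    refine Tendsto.congr' (hev.mono fun w hw => (hGne w hw).symm) ?_
    have h3 : Tendsto (fun w => (E w)⁻¹) (comap Complex.re atTop) (𝓝 0) := by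
      apply tendsto_inv₀_cobounded.comp
      rw [hE]
      apply (tendsto_const_sub_cobounded _).comp
      apply Complex.tendsto_exp_comap_re_atTop.comp
      rw [tendsto_comap_iff]
      refine (tendsto_atTop_add_const_right _ (-a.re) tendsto_comap).congr fun w => by
        simp [sub_eq_add_neg]
    simpa [div_eq_mul_inv] using (hgr.sub_const (g a)).mul h3
  · have hev : ∀ᶠ w in comap Complex.re atBot, w ≠ a := by
      filter_upwards [tendsto_comap.eventually (eventually_lt_atBot a.re)] with w hw h
      simp [h] at hw
    refine Tendsto.congr' (hev.mono fun w hw => (hGne w hw).symm) ?_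
    have h3 : Tendsto E (comap Complex.re atBot) (𝓝 1) := by
      have := (Complex.tendsto_exp_comap_re_atBot.const_mul (s : ℂ)).const_sub 1
      simp only [mul_zero, sub_zero] at this
      exact this.congr fun w => (hE' w).symm
    have h4 := (hgl.sub_const (g a)).div h3 one_ne_zero
    have hga : g a = (((1 + (s ^ μ)⁻¹)⁻¹ : ℝ) : ℂ) := by
      rw [hg]; simp only [ha]
      rw [← Complex.ofReal_mul, ← Complex.ofReal_exp, Real.rpow_def_of_pos hs, ← Real.exp_neg]
      push_cast
      congr 4; ring
    have hlim : ((1 / (1 + s ^ μ) : ℝ) : ℂ) = (1 - g a) / 1 := by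
      rw [hga, div_one]
      have hp : 0 < s ^ μ := Real.rpow_pos_of_pos hs μ
      rw [← Complex.ofReal_one, ← Complex.ofReal_sub]
      congr 1
      field_simp
      ring
    rw [hlim]
    exact h4
  · intro t
    have ne1 : (t - π * Complex.I : ℂ) ≠ a := fun h => by
      have := congrArg Complex.im h
      simp [ha, Real.pi_ne_zero] at this
    have ne2 : (t + π * Complex.I : ℂ) ≠ a := fun h => by
      have := congrArg Complex.im h
      simp [ha, Real.pi_ne_zero] at this
    have E1 : E (t - π * Complex.I) = ((1 + s * Real.exp t : ℝ) : ℂ) := by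
      rw [hE', Complex.exp_sub, Complex.exp_pi_mul_I]; push_cast; ring
    have E2 : E (t + π * Complex.I) = ((1 + s * Real.exp t : ℝ) : ℂ) := by
      rw [hE', Complex.exp_add, Complex.exp_pi_mul_I]; push_cast; ring
    simp only [hGne _ ne1, hGne _ ne2, E1, E2]
    rw [Complex.ofReal_div, Complex.ofReal_one]
    simp only [hg]
    ring

theorem integral_eq_of_tendsto_of_nonneg {f : ℝ → ℝ} {L : ℝ} (hf : Continuous f)
    (h0 : ∀ t, 0 ≤ f t) (h : Tendsto (fun R : ℝ => ∫ t in (-R)..R, f t) atTop (𝓝 L)) :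
    ∫ t, f t = L := by
  have hint : Integrable f := by
    refine integrable_of_intervalIntegral_norm_tendsto L
      (fun i => hf.integrableOn_Ioc) tendsto_neg_atTop_atBot tendsto_id ?_
    simpa [abs_of_nonneg (h0 _)] using h
  exact tendsto_nhds_unique
    (intervalIntegral_tendsto_integral hint tendsto_neg_atTop_atBot tendsto_id) h

theorem stieltjes_integral_identity
    (μ : ℝ) (hμ : μ ∈ Set.Ioo (0:ℝ) 1) (s : ℝ) (hs : 0 ≤ s) :
    ∫ y in Set.Ioi (0:ℝ),
      Real.sin (π * μ) / (π * μ) * (1 / (y ^ 2 + 2 * y * Real.cos (π * μ) + 1)) *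
        (1 / (1 + s * y ^ ((1:ℝ)/μ))) = 1 / (1 + s ^ μ) := by
  obtain ⟨h0, h1⟩ := hμ
  have hsin : 0 < Real.sin (π * μ) :=
    Real.sin_pos_of_pos_of_lt_pi (by positivity) (by nlinarith [Real.pi_pos])
  have hD (t : ℝ) := sq_add_two_mul_cos_add_one_pos hsin (Real.exp (μ * t))
  have hs1 (t : ℝ) : 0 < 1 + s * Real.exp t := by positivity
  have himg : (fun t : ℝ => Real.exp (μ * t)) '' Set.univ = Set.Ioi 0 := by
    ext y
    simp only [Set.image_univ, Set.mem_range, Set.mem_Ioi]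
    constructor
    · rintro ⟨t, rfl⟩; positivity
    · intro hy
      exact ⟨Real.log y / μ, by rw [mul_div_cancel₀ _ h0.ne', Real.exp_log hy]⟩
  rw [← himg, integral_image_eq_integral_abs_deriv_smul (f' := fun t => Real.exp (μ * t) * μ)
    MeasurableSet.univ
    (fun t _ => HasDerivAt.hasDerivWithinAt (by
      simpa using ((hasDerivAt_id t).const_mul μ).exp))
    (fun x _ y _ h => mul_left_cancel₀ h0.ne' (Real.exp_injective h)), setIntegral_univ]
  set F : ℝ → ℝ := fun t => π⁻¹ * (Real.sin (π * μ) * (Real.exp (μ * t) /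
    (Real.exp (μ * t) ^ 2 + 2 * Real.exp (μ * t) * Real.cos (π * μ) + 1)) *
      (1 / (1 + s * Real.exp t))) with hF
  have hcongr (t : ℝ) : |Real.exp (μ * t) * μ| • (Real.sin (π * μ) / (π * μ) *
      (1 / (Real.exp (μ * t) ^ 2 + 2 * Real.exp (μ * t) * Real.cos (π * μ) + 1)) *
        (1 / (1 + s * Real.exp (μ * t) ^ ((1:ℝ)/μ)))) = F t := by
    rw [abs_of_pos (by positivity), smul_eq_mul, ← Real.exp_mul,
      show μ * t * (1 / μ) = t by field_simp, hF]
    have := hD t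
    have := hs1 t
    field_simp
  simp only [hcongr]
  apply integral_eq_of_tendsto_of_nonneg
  · have h2 (t : ℝ) := (hD t).ne'
    have h3 (t : ℝ) := (hs1 t).ne'
    fun_prop (disch := assumption)
  · intro t
    have := hD t
    have := hs1 t
    positivity
  obtain ⟨G, hGd, hGr, hGl, hGj⟩ := exists_differentiableOn_strip_with_jump h0 h1 hs
  have key := tendsto_intervalIntegral_strip_jump Real.pi_pos.le hGd hGr hGl
  have hpi : (π : ℂ) ≠ 0 := by exact_mod_cast Real.pi_ne_zero
  have hjump (t : ℝ) : G (t - π * Complex.I) - G (t + π * Complex.I) =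
      2 * π * Complex.I * (F t : ℂ) := by
    rw [hGj, jump_inv_one_add_exp h0 h1, hF]
    push_cast
    field_simp
  simp only [hjump, intervalIntegral.integral_const_mul, intervalIntegral.integral_ofReal,
    sub_zero] at key
  have hc : (2 * π * Complex.I : ℂ) ≠ 0 := by simp [hpi]
  have key2 := key.const_mul (2 * π * Complex.I : ℂ)⁻¹
  simp only [inv_mul_cancel_left₀ hc] at key2
  exact_mod_cast (Complex.continuous_re.tendsto _).comp key2
end
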